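/- Let S be a maximal cap in AG(4,3) with anchor the zero vector, let T be a linear automorphism of (Fin 4 → ZMod 3) with T(S) = S (as a set), and let C be a maximal cap disjoint from S. Then the number of cap-partitions containing both S and C equals the number of cap-partitions containing both S and T(C). (Linear transformations fixing S preserve S-i-completability for i = 1, 2, 6.) -/

import Mathlib

/-!
An affine map `f` over `ZMod 3` satisfies `f x + f y + f z = f.linear (x + y + z)`, because the
three copies of its translation part cancel in characteristic 3. Hence an affine automorphism
`e` preserves collinearity, so it permutes the maximal caps and the cap-partitions, and
`P ↦ e(P)` is a bijection from the cap-partitions through `S` and `C` to those through `e(S)` and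
`e(C)`. It remains to take `e` linear with `e(S) = S`.
-/

/-- A cap in `AG(n,3)`: a finite set of points of `Fin n → ZMod 3` containing no
three distinct collinear points (three distinct points are collinear iff they sum to zero). -/
def IsCap {n : ℕ} (C : Finset (Fin n → ZMod 3)) : Prop :=
  ∀ x ∈ C, ∀ y ∈ C, ∀ z ∈ C, x ≠ y → x ≠ z → y ≠ z → x + y + z ≠ 0

/-- A maximal cap: a cap of largest possible size. -/
def MaximalCap {n : ℕ} (C : Finset (Fin n → ZMod 3)) : Prop :=
  IsCap C ∧ ∀ D : Finset (Fin n → ZMod 3), IsCap D → D.card ≤ C.card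

/-- A cap-partition of `AG(4,3)`: an unordered set of four pairwise disjoint maximal caps
whose union is the complement of a single point. -/
def IsCapPartition (P : Finset (Finset (Fin 4 → ZMod 3))) : Prop :=
  P.card = 4 ∧ (∀ C ∈ P, MaximalCap C) ∧
  (∀ C ∈ P, ∀ D ∈ P, C ≠ D → Disjoint C D) ∧
  ∃ a : Fin 4 → ZMod 3, P.sup id = Finset.univ \ {a}

section Collinearity

variable {V W : Type*} [AddCommGroup V] [Module (ZMod 3) V] [AddCommGroup W] [Module (ZMod 3) W]

theorem affineMap_add_add_eq_linear (f : V →ᵃ[ZMod 3] W) (x y z : V) :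
    f x + f y + f z = f.linear (x + y + z) := by
  have eval (p : V) : f p = f.linear p + f 0 := congrFun f.decomp p
  calc f x + f y + f z = f.linear (x + y + z) + 3 • f 0 := by
        rw [eval x, eval y, eval z, map_add, map_add]; abel
    _ = f.linear (x + y + z) := by rw [ZModModule.char_nsmul_eq_zero 3 (f 0), add_zero]

theorem affineMap_add_add_eq_zero_iff {f : V →ᵃ[ZMod 3] W} (hf : Function.Injective f)
    {x y z : V} : f x + f y + f z = 0 ↔ x + y + z = 0 := by
  rw [affineMap_add_add_eq_linear, map_eq_zero_iff f.linear (f.linear_injective_iff.mpr hf)]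

end Collinearity

section Caps

variable {m n : ℕ}

theorem IsCap.image {f : (Fin n → ZMod 3) →ᵃ[ZMod 3] (Fin m → ZMod 3)}
    (hf : Function.Injective f) {C : Finset (Fin n → ZMod 3)} (hC : IsCap C) :
    IsCap (C.image f) := by
  simp only [IsCap, Finset.forall_mem_image, hf.ne_iff, ne_eq, affineMap_add_add_eq_zero_iff hf]
  exact hC

theorem MaximalCap.image {f : (Fin n → ZMod 3) →ᵃ[ZMod 3] (Fin n → ZMod 3)}
    (hf : Function.Injective f) {C : Finset (Fin n → ZMod 3)} (hC : MaximalCap C) :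
    MaximalCap (C.image f) := by
  refine ⟨hC.1.image hf, fun D hD => ?_⟩
  rw [Finset.card_image_of_injective C hf]
  exact hC.2 D hD

end Caps

theorem sup_id_image_image {α β : Type*} [DecidableEq α] [DecidableEq β] (f : α → β)
    (P : Finset (Finset α)) :
    (P.image (Finset.image f)).sup id = (P.sup id).image f := by
  simp only [Finset.sup_eq_biUnion, Finset.image_biUnion, Finset.biUnion_image, id]

theorem finsetCongr_finsetCongr_apply {α β : Type*} [DecidableEq β] (e : α ≃ β)
    (P : Finset (Finset α)) :
    e.finsetCongr.finsetCongr P = P.image (Finset.image e) := by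
  ext D
  simp [Finset.map_eq_image]

theorem IsCapPartition.image (e : (Fin 4 → ZMod 3) ≃ᵃ[ZMod 3] (Fin 4 → ZMod 3))
    {P : Finset (Finset (Fin 4 → ZMod 3))} (hP : IsCapPartition P) :
    IsCapPartition (P.image (Finset.image e)) := by
  obtain ⟨hcard, hmax, hdisj, a, hsup⟩ := hP
  refine ⟨?_, ?_, ?_, e a, ?_⟩
  · rw [Finset.card_image_of_injective P (Finset.image_injective e.injective), hcard]
  · exact Finset.forall_mem_image.mpr fun C hC => (hmax C hC).image (f := e.toAffineMap) e.injective
  · refine Finset.forall_mem_image.mpr fun C hC => Finset.forall_mem_image.mpr fun D hD hne => ?_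
    exact (Finset.disjoint_image e.injective).mpr (hdisj C hC D hD (ne_of_apply_ne _ hne))
  · rw [sup_id_image_image, hsup, Finset.image_sdiff _ _ e.injective,
      Finset.image_univ_of_surjective e.surjective, Finset.image_singleton]

theorem isCapPartition_image_iff (e : (Fin 4 → ZMod 3) ≃ᵃ[ZMod 3] (Fin 4 → ZMod 3))
    {P : Finset (Finset (Fin 4 → ZMod 3))} :
    IsCapPartition (P.image (Finset.image e)) ↔ IsCapPartition P := by
  refine ⟨fun h => ?_, IsCapPartition.image e⟩
  have image_symm_image : (P.image (Finset.image e)).image (Finset.image e.symm) = P := by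
    simp [Finset.image_image, Function.comp_def]
  exact image_symm_image ▸ h.image e.symm

theorem linear_stabilizer_preserves_completability_AG43_general
    (e : (Fin 4 → ZMod 3) ≃ᵃ[ZMod 3] (Fin 4 → ZMod 3)) (S C : Finset (Fin 4 → ZMod 3)) :
    Nat.card {P : Finset (Finset (Fin 4 → ZMod 3)) //
        IsCapPartition P ∧ S ∈ P ∧ C ∈ P} =
      Nat.card {P : Finset (Finset (Fin 4 → ZMod 3)) //
        IsCapPartition P ∧ S.image e ∈ P ∧ C.image e ∈ P} := by
  refine Nat.card_congr (e.toEquiv.finsetCongr.finsetCongr.subtypeEquiv fun P => ?_)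
  have himage : Function.Injective (Finset.image e) := Finset.image_injective e.injective
  rw [finsetCongr_finsetCongr_apply, AffineEquiv.coe_toEquiv, isCapPartition_image_iff,
    himage.mem_finset_image, himage.mem_finset_image]

/-- A linear automorphism fixing a maximal cap `S` (with anchor the zero vector) as a set
preserves the number of cap-partitions a disjoint cap lies in with `S`, i.e. it preserves
S-i-completability for i = 1, 2, 6. -/
theorem linear_stabilizer_preserves_completability_AG43
    (S : Finset (Fin 4 → ZMod 3)) (hS : MaximalCap S) (haS : ∑ x ∈ S, x = 0)
    (T : (Fin 4 → ZMod 3) ≃ₗ[ZMod 3] (Fin 4 → ZMod 3))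
    (hT : S.image (fun x => T x) = S)
    (C : Finset (Fin 4 → ZMod 3)) (hC : MaximalCap C) (hdisj : Disjoint S C) :
    Nat.card {P : Finset (Finset (Fin 4 → ZMod 3)) //
        IsCapPartition P ∧ S ∈ P ∧ C ∈ P} =
      Nat.card {P : Finset (Finset (Fin 4 → ZMod 3)) //
        IsCapPartition P ∧ S ∈ P ∧ C.image (fun x => T x) ∈ P} := by
  simpa only [LinearEquiv.coe_toAffineEquiv, hT] using
    linear_stabilizer_preserves_completability_AG43_general T.toAffineEquiv S C
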